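/- arXiv:2109.01497 — 2 statements merged into one kernel-verified Lean document; each statement's English description precedes it below -/
import Mathlib

section
/- Let n ≥ 2, R > 0 and Q > 0. There exists a constant C > 0, depending only on n, R and Q, with the following property: for every measurable V : ℝⁿ → ℝ with |V(x)| ≤ Q for all x, every real λ ≥ 2Q + 1, and every smooth u : ℝⁿ → ℝ satisfying Δ²u + V·u = λ·u at every point of the closed ball of radius R centered at the origin, with u(x) = 0 and Δu(x) = 0 for every x ∈ ∂B_R, and normalized so that ∫_{B_R} u² dx = 1, one has ∫_{∂B_R} |∂_ν u|² dσ ≤ C·λ and ∫_{∂B_R} |∂_ν(Δu)|² dσ ≤ C·λ². -/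
open MeasureTheory Metric

/-- The Laplacian of a real-valued function on `EuclideanSpace ℝ (Fin n)`:
the trace of the second Fréchet derivative. -/
noncomputable def lapR (n : ℕ) (f : EuclideanSpace ℝ (Fin n) → ℝ) (x : EuclideanSpace ℝ (Fin n)) : ℝ :=
  ∑ i : Fin n, fderiv ℝ (fderiv ℝ f) x (EuclideanSpace.single i 1) (EuclideanSpace.single i 1)

/-- The normal derivative on the sphere of radius `R`: `∂_ν f (x) = (fderiv f x)(x/R)`. -/
noncomputable def normalDerivR (n : ℕ) (R : ℝ) (f : EuclideanSpace ℝ (Fin n) → ℝ)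
    (x : EuclideanSpace ℝ (Fin n)) : ℝ :=
  fderiv ℝ f x (R⁻¹ • x)

open Set Filter Topology in
lemma zeroExt_lip {E : Type*} [NormedAddCommGroup E] [NormedSpace ℝ E] [ProperSpace E]
    (F : E → ℝ) (hF : ContDiff ℝ 1 F) (R : ℝ) (h0 : ∀ x ∈ sphere (0 : E) R, F x = 0) :
    ∃ K, LipschitzWith K ((ball (0 : E) R).indicator F) := by
  obtain ⟨M, hM⟩ := (isCompact_closedBall (0 : E) R).exists_bound_of_continuousOn
    (hF.continuous_fderiv (by norm_num)).continuousOn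
  have hlip : LipschitzOnWith (Real.toNNReal M) F (closedBall (0 : E) R) := by
    apply (convex_closedBall (0 : E) R).lipschitzOnWith_of_nnnorm_fderiv_le (𝕜 := ℝ)
    · intro x _; exact (hF.differentiable (by norm_num)) x
    · intro x hx
      have := hM x hx
      rw [← NNReal.coe_le_coe, coe_nnnorm]
      exact this.trans (Real.le_coe_toNNReal M)
  have key : ∀ x y : E, x ∈ ball (0 : E) R → y ∉ ball (0 : E) R →
      |F x| ≤ (Real.toNNReal M : ℝ) * dist x y := by
    intro x y hx hy
    have hc : ContinuousOn (fun t : ℝ => ‖AffineMap.lineMap x y t‖) (Icc 0 1) := by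
      apply Continuous.continuousOn
      exact (AffineMap.lineMap_continuous).norm
    have hiv := intermediate_value_Icc (zero_le_one) hc
    have hm : R ∈ Icc ‖AffineMap.lineMap x y (0 : ℝ)‖ ‖AffineMap.lineMap x y (1 : ℝ)‖ := by
      simp at hx hy ⊢
      exact ⟨hx.le, hy⟩
    obtain ⟨t, ht, htR⟩ := hiv hm
    set z := AffineMap.lineMap x y t with hz
    have hzs : z ∈ sphere (0 : E) R := by simpa using htR
    have h1 := hlip.dist_le_mul x (ball_subset_closedBall hx) z (sphere_subset_closedBall hzs)
    rw [h0 z hzs, Real.dist_eq, sub_zero] at h1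
    refine h1.trans ?_
    gcongr
    rw [hz, dist_left_lineMap, Real.norm_eq_abs, abs_of_nonneg ht.1]
    exact mul_le_of_le_one_left dist_nonneg ht.2
  refine ⟨Real.toNNReal M, LipschitzWith.of_dist_le_mul fun x y => ?_⟩
  by_cases hx : x ∈ ball (0 : E) R <;> by_cases hy : y ∈ ball (0 : E) R
  · rw [indicator_of_mem hx, indicator_of_mem hy]
    exact hlip.dist_le_mul x (ball_subset_closedBall hx) y (ball_subset_closedBall hy)
  · rw [indicator_of_mem hx, indicator_of_notMem hy, Real.dist_eq, sub_zero]
    exact key x y hx hy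
  · rw [indicator_of_notMem hx, indicator_of_mem hy, dist_comm, Real.dist_eq, sub_zero, dist_comm]
    exact key y x hy hx
  · rw [indicator_of_notMem hx, indicator_of_notMem hy, dist_self]
    positivity

open Set Filter Topology in
lemma integral_fderiv_zero {E : Type*} [NormedAddCommGroup E] [NormedSpace ℝ E]
    [FiniteDimensional ℝ E] [MeasureSpace E] [BorelSpace E] [(volume : Measure E).IsAddHaarMeasure]
    (F : E → ℝ) (hF : ContDiff ℝ 1 F) (R : ℝ) (hR : 0 < R)
    (h0 : ∀ x ∈ sphere (0 : E) R, F x = 0) (v : E) :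
    ∫ x in ball (0 : E) R, fderiv ℝ F x v = 0 := by
  have : ProperSpace E := FiniteDimensional.proper ℝ E
  obtain ⟨K, hK⟩ := zeroExt_lip F hF R h0
  have hcs : HasCompactSupport ((ball (0 : E) R).indicator F) := by
    apply HasCompactSupport.intro (isCompact_closedBall (0 : E) R)
    intro x hx
    exact indicator_of_notMem (fun h => hx (ball_subset_closedBall h)) _
  have h1 := (LipschitzWith.const (1 : ℝ) : LipschitzWith 0 (fun _ : E => (1 : ℝ))).integral_lineDeriv_mul_eq (μ := volume) hK hcs (-v)
  have hlc : ∀ (a : ℝ) (x w : E), lineDeriv ℝ (fun _ : E => a) x w = 0 := by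
    intro a x w; simp [lineDeriv]
  simp only [hlc, zero_mul, integral_zero, neg_neg, mul_one] at h1
  rw [← integral_indicator measurableSet_ball]
  refine Eq.trans ?_ h1.symm
  apply integral_congr_ae
  have hs : ∀ᵐ x ∂(volume : Measure E), x ∉ sphere (0 : E) R :=
    measure_eq_zero_iff_ae_notMem.1 (Measure.addHaar_sphere_of_ne_zero volume 0 hR.ne')
  filter_upwards [hs] with x hx
  by_cases hxb : x ∈ ball (0 : E) R
  · rw [indicator_of_mem hxb]
    have he : (ball (0 : E) R).indicator F =ᶠ[𝓝 x] F := by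
      filter_upwards [isOpen_ball.mem_nhds hxb] with y hy using indicator_of_mem hy _
    rw [he.lineDeriv_eq]
    exact ((hF.differentiable (by norm_num)) x).lineDeriv_eq_fderiv.symm
  · rw [indicator_of_notMem hxb]
    have hxc : x ∈ (closedBall (0 : E) R)ᶜ := by
      intro h
      rw [← ball_union_sphere] at h
      exact h.elim hxb hx
    have he : (ball (0 : E) R).indicator F =ᶠ[𝓝 x] fun _ => 0 := by
      filter_upwards [isClosed_closedBall.isOpen_compl.mem_nhds hxc] with y hy
      exact indicator_of_notMem (fun h => hy (ball_subset_closedBall h)) _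
    rw [he.lineDeriv_eq, hlc]
open Set Filter Topology in
lemma fderiv_tangent {E : Type*} [NormedAddCommGroup E] [InnerProductSpace ℝ E]
    (f : E → ℝ) (hf : Differentiable ℝ f) (R : ℝ) (hR : 0 < R)
    (h0 : ∀ x ∈ sphere (0 : E) R, f x = 0) (x : E) (hx : x ∈ sphere (0 : E) R) (v : E) :
    fderiv ℝ f x v = inner ℝ x v / R ^ 2 * fderiv ℝ f x x := by
  have hxn : ‖x‖ = R := by simpa using hx
  have key : ∀ w : E, inner ℝ x w = 0 → ‖w‖ = R → fderiv ℝ f x w = 0 := by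
    intro w hw hwn
    have hc : HasDerivAt (fun t : ℝ => Real.cos t • x + Real.sin t • w) w 0 := by
      have := ((Real.hasDerivAt_cos 0).smul_const x).add ((Real.hasDerivAt_sin 0).smul_const w)
      simpa [Pi.add_def] using this
    have h1 : HasDerivAt (fun t : ℝ => f (Real.cos t • x + Real.sin t • w)) (fderiv ℝ f x w) 0 := by
      have h2 : HasFDerivAt f (fderiv ℝ f x) (Real.cos 0 • x + Real.sin 0 • w) := by
        simpa using (hf x).hasFDerivAt
      exact h2.comp_hasDerivAt 0 hc
    have h3 : (fun t : ℝ => f (Real.cos t • x + Real.sin t • w)) = fun _ => 0 := by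
      funext t
      apply h0
      rw [mem_sphere_zero_iff_norm]
      have : ‖Real.cos t • x + Real.sin t • w‖ ^ 2 = R ^ 2 := by
        rw [norm_add_sq_real, norm_smul, norm_smul, inner_smul_left, inner_smul_right, hw, hxn, hwn,
          mul_pow, mul_pow, Real.norm_eq_abs, Real.norm_eq_abs, sq_abs, sq_abs]
        have := Real.sin_sq_add_cos_sq t
        simp
        linear_combination R ^ 2 * this
      exact (pow_left_inj₀ (norm_nonneg _) hR.le two_ne_zero).1 this
    rw [h3] at h1
    exact h1.unique (hasDerivAt_const _ _)
  set w := v - (inner ℝ x v / R ^ 2) • x with hw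
  have hperp : inner ℝ x w = 0 := by
    rw [hw, inner_sub_right, inner_smul_right, real_inner_self_eq_norm_sq, hxn]
    field_simp
    ring
  have hfw : fderiv ℝ f x w = 0 := by
    by_cases hw0 : w = 0
    · rw [hw0, map_zero]
    · have hn : 0 < ‖w‖ := norm_pos_iff.2 hw0
      have := key ((R / ‖w‖) • w) (by rw [inner_smul_right, hperp, mul_zero])
        (by rw [norm_smul, Real.norm_eq_abs, abs_of_pos (by positivity)]; field_simp)
      rw [map_smul, smul_eq_mul] at this
      exact (mul_eq_zero.1 this).resolve_left (by positivity)
  rw [hw, map_sub, map_smul, smul_eq_mul] at hfw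
  linarith
open Set Filter Topology in
lemma polar_ball {E : Type*} [NormedAddCommGroup E] [NormedSpace ℝ E]
    [FiniteDimensional ℝ E] [MeasureSpace E] [BorelSpace E] [(volume : Measure E).IsAddHaarMeasure]
    [Nontrivial E]
    (R : ℝ) (hR : 0 < R) (g : E → ℝ) (hg : IntegrableOn g (ball (0 : E) R)) :
    ∫ x in ball (0 : E) R, g x = ∫ ω : sphere (0 : E) 1,
      (∫ r in (0 : ℝ)..R, r ^ (Module.finrank ℝ E - 1) * g (r • (ω : E)))
        ∂((volume : Measure E).toSphere) := by
  set G := (ball (0 : E) R).indicator g with hG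
  have hGi : Integrable G := (integrable_indicator_iff measurableSet_ball).2 hg
  have hmp := (volume : Measure E).measurePreserving_homeomorphUnitSphereProd
  have hGi' : Integrable (fun x : ({0}ᶜ : Set E) => G x)
      ((volume : Measure E).comap (Subtype.val)) := by
    have := (integrableOn_iff_comap_subtypeVal (measurableSet_singleton (0 : E)).compl).1
      (hGi.integrableOn (s := {0}ᶜ))
    exact this
  have e1 : (fun p : sphere (0 : E) 1 × Ioi (0 : ℝ) => G ((p.2 : ℝ) • (p.1 : E))) ∘
      (homeomorphUnitSphereProd E) = fun x : ({0}ᶜ : Set E) => G x := by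
    funext x
    have hx : (‖(x : E)‖) ≠ 0 := norm_ne_zero_iff.2 x.2
    simp [smul_smul, mul_inv_cancel₀ hx]
  have hIg : Integrable (fun p : sphere (0 : E) 1 × Ioi (0 : ℝ) => G ((p.2 : ℝ) • (p.1 : E)))
      ((volume : Measure E).toSphere.prod (Measure.volumeIoiPow (Module.finrank ℝ E - 1))) := by
    rw [← hmp.integrable_comp_emb (Homeomorph.measurableEmbedding _), e1]
    exact hGi'
  rw [← integral_indicator measurableSet_ball]
  calc ∫ x, G x = ∫ x : ({(0)}ᶜ : Set E), G x ∂((volume : Measure E).comap (↑)) := by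
        rw [integral_subtype_comap (measurableSet_singleton _).compl fun x ↦ G x,
          restrict_compl_singleton]
    _ = ∫ p : sphere (0 : E) 1 × Ioi (0 : ℝ), G ((p.2 : ℝ) • (p.1 : E))
          ∂((volume : Measure E).toSphere.prod (Measure.volumeIoiPow (Module.finrank ℝ E - 1))) := by
        rw [← hmp.integral_comp (Homeomorph.measurableEmbedding _)]
        exact integral_congr_ae (Eventually.of_forall fun x => (congrFun e1 x).symm)
    _ = _ := by
        rw [integral_prod _ hIg]
        apply integral_congr_ae
        refine Eventually.of_forall fun ω => ?_
        simp only [Measure.volumeIoiPow, ENNReal.ofReal]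
        rw [integral_withDensity_eq_integral_smul,
          integral_subtype_comap measurableSet_Ioi fun a : ℝ ↦
            Real.toNNReal (a ^ (Module.finrank ℝ E - 1)) • G (a • (ω : E))]
        · rw [intervalIntegral.integral_of_le hR.le, integral_Ioc_eq_integral_Ioo]
          have hI : Ioo (0 : ℝ) R = Ioi 0 ∩ Iio R := rfl
          rw [hI, inter_comm, ← Measure.restrict_restrict measurableSet_Iio,
            ← integral_indicator measurableSet_Iio]
          refine setIntegral_congr_fun measurableSet_Ioi fun r hr => ?_
          have hr0 : 0 < r := hr
          have hω : ‖(ω : E)‖ = 1 := by simp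
          have hn : ‖r • (ω : E)‖ = r := by
            rw [norm_smul, hω, mul_one, Real.norm_eq_abs, abs_of_pos hr0]
          rw [NNReal.smul_def, Real.coe_toNNReal _ (pow_nonneg hr0.le _), smul_eq_mul]
          by_cases h : r < R
          · rw [indicator_of_mem (show r ∈ Iio R from h), hG, indicator_of_mem]
            rw [mem_ball_zero_iff, hn]; exact h
          · rw [indicator_of_notMem (show r ∉ Iio R from h), hG, indicator_of_notMem, mul_zero]
            rw [mem_ball_zero_iff, hn]; exact h
        · exact (measurable_subtype_coe.pow_const _).real_toNNReal

open Set Filter Topology in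
lemma radial_integrable (n : ℕ) (R : ℝ) (hR : 0 < R) (g : EuclideanSpace ℝ (Fin n) → ℝ)
    (hg : Continuous g) : IntegrableOn (fun x => g ((R / ‖x‖) • x)) (ball 0 R) := by
  obtain ⟨M, hM⟩ := (isCompact_closedBall (0 : EuclideanSpace ℝ (Fin n)) R).exists_bound_of_continuousOn
    hg.continuousOn
  have hρm : Measurable fun x : EuclideanSpace ℝ (Fin n) => (R / ‖x‖) • x :=
    (measurable_const.div measurable_norm).smul measurable_id
  have : IsFiniteMeasure (volume.restrict (ball (0 : EuclideanSpace ℝ (Fin n)) R)) :=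
    ⟨by simpa using measure_ball_lt_top⟩
  apply Integrable.of_bound (C := M) (hg.measurable.comp hρm).aestronglyMeasurable
  refine Eventually.of_forall fun x => hM _ ?_
  rw [mem_closedBall_zero_iff]
  simp only [norm_smul, norm_div, norm_norm]
  rw [Real.norm_eq_abs, abs_of_pos hR]
  by_cases hx : ‖x‖ = 0
  · simp [hx, hR.le]
  · rw [div_mul_cancel₀ _ hx]

lemma cont_int {n : ℕ} (R : ℝ) {g : EuclideanSpace ℝ (Fin n) → ℝ}
    (hg : Continuous g) : IntegrableOn g (ball 0 R) :=
  (hg.continuousOn.integrableOn_compact (isCompact_closedBall 0 R)).mono_set ball_subset_closedBall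

open Set Filter Topology in
lemma radial_div (n : ℕ) (hn : 2 ≤ n) (R : ℝ) (hR : 0 < R) (h : EuclideanSpace ℝ (Fin n) → ℝ)
    (hh : ContDiff ℝ 1 h) :
    ∫ x in ball (0 : EuclideanSpace ℝ (Fin n)) R, (n * h x + fderiv ℝ h x x) =
      n * ∫ x in ball (0 : EuclideanSpace ℝ (Fin n)) R, h ((R / ‖x‖) • x) := by
  have : Nontrivial (EuclideanSpace ℝ (Fin n)) := by
    have : Nonempty (Fin n) := ⟨⟨0, by omega⟩⟩
    infer_instance
  have hcf : Continuous fun x => fderiv ℝ h x x :=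
    (hh.continuous_fderiv (by norm_num)).clm_apply continuous_id
  rw [polar_ball R hR (fun x => n * h x + fderiv ℝ h x x) (cont_int R ((continuous_const.mul hh.continuous).add hcf)),
    polar_ball R hR (fun x => h ((R / ‖x‖) • x)) (radial_integrable n R hR h hh.continuous), ← integral_const_mul]
  apply integral_congr_ae
  refine Eventually.of_forall fun ω => ?_
  simp only [finrank_euclideanSpace, Fintype.card_fin]
  have hω : ‖(ω : EuclideanSpace ℝ (Fin n))‖ = 1 := by simp
  set w := ω.1
  have hnn : n - 1 + 1 = n := by omega
  have hd : ∀ r : ℝ, HasDerivAt (fun r : ℝ => r ^ n * h (r • w))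
      (r ^ (n - 1) * (n * h (r • w) + fderiv ℝ h (r • w) (r • w))) r := by
    intro r
    have h1 : HasDerivAt (fun r : ℝ => r • w) w r := by
      simpa using (hasDerivAt_id r).smul_const w
    have h2 := ((hh.differentiable (by norm_num)) (r • w)).hasFDerivAt.comp_hasDerivAt r h1
    have h3 := (hasDerivAt_pow n r).mul h2
    convert! h3 using 1
    rw [map_smul, smul_eq_mul]
    simp only [Function.comp_def]
    have : r ^ n = r ^ (n - 1) * r := by rw [← pow_succ, hnn]
    rw [this]
    ring
  have hL : ∫ r in (0 : ℝ)..R, r ^ (n - 1) * (n * h (r • w) + fderiv ℝ h (r • w) (r • w)) =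
      R ^ n * h (R • w) := by
    rw [intervalIntegral.integral_eq_sub_of_hasDerivAt (fun r _ => hd r)]
    · simp [show n ≠ 0 by omega]
    · apply Continuous.intervalIntegrable
      have hs : Continuous fun r : ℝ => r • w := continuous_id.smul continuous_const
      exact (continuous_pow _).mul ((continuous_const.mul (hh.continuous.comp hs)).add (hcf.comp hs))
  have hRR : ∫ r in (0 : ℝ)..R, r ^ (n - 1) * h ((R / ‖r • w‖) • r • w) =
      ∫ r in (0 : ℝ)..R, r ^ (n - 1) * h (R • w) := by
    apply intervalIntegral.integral_congr_ae
    refine Eventually.of_forall fun r hr => ?_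
    rw [uIoc_of_le hR.le] at hr
    have hr0 : 0 < r := hr.1
    rw [norm_smul, hω, mul_one, Real.norm_eq_abs, abs_of_pos hr0, smul_smul,
      div_mul_cancel₀ _ hr0.ne']
  rw [hL, hRR, intervalIntegral.integral_mul_const, integral_pow, hnn]
  have : ((n - 1 : ℕ) : ℝ) + 1 = n := by exact_mod_cast hnn
  rw [this]
  have hn0 : (n : ℝ) ≠ 0 := by exact_mod_cast (show n ≠ 0 by omega)
  simp only [ne_eq, show n ≠ 0 by omega, not_false_eq_true, zero_pow, sub_zero]
  field_simp
open Set Filter Topology in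
lemma exists_net {E : Type*} [MetricSpace E] (K : Set E) (hK : IsCompact K) (δ : ℝ)
    (hδ : 0 < δ) : ∃ t : Finset E, (t : Set E) ⊆ K ∧
      ((t : Set E).Pairwise fun x y => δ < dist x y) ∧ K ⊆ ⋃ x : t, closedBall (x : E) δ := by
  set ε : NNReal := ⟨δ / 2, by positivity⟩ with hε
  have hfin : packingNumber (2 * ε) K ≠ ⊤ := by
    apply ne_top_of_le_ne_top _ (packingNumber_two_mul_le_externalCoveringNumber ε K)
    obtain ⟨N, hN1, hN2, hN3⟩ := exists_finite_isCover_of_totallyBounded (ε := ε) (s := K)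
      (by rw [← NNReal.coe_ne_zero, hε]; change δ / 2 ≠ 0; positivity) hK.totallyBounded
    have := hN3.externalCoveringNumber_le_encard
    exact ne_top_of_le_ne_top (by simpa using hN2) this
  have h2 : ((2 * ε : NNReal) : ℝ) = δ := by
    rw [hε]; change 2 * (δ / 2) = δ; ring
  set S := maximalSeparatedSet (2 * ε) K
  have hSf : S.Finite := by
    rw [← Set.encard_ne_top_iff, encard_maximalSeparatedSet hfin]; exact hfin
  refine ⟨hSf.toFinset, ?_, ?_, ?_⟩
  · simpa using maximalSeparatedSet_subset
  · intro x hx y hy hxy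
    have := isSeparated_maximalSeparatedSet (ε := 2 * ε) (A := K) (by simpa using hx) (by simpa using hy) hxy
    simp only [edist_nndist] at this
    rw [← h2, ← coe_nndist]
    exact_mod_cast this
  · have := isCover_maximalSeparatedSet hfin
    rw [isCover_iff_subset_iUnion_closedBall] at this
    rw [h2] at this
    intro x hx
    have := this hx
    simp only [mem_iUnion] at this ⊢
    obtain ⟨y, hy, hxy⟩ := this
    exact ⟨⟨y, by simpa using hy⟩, hxy⟩

lemma bern_aux (n : ℕ) (s : ℝ) (h0 : 0 ≤ s) (h1 : s ≤ 1) :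
    (1 + s) ^ n - (1 - s) ^ n ≤ 2 * n * 2 ^ n * s := by
  induction n with
  | zero => simp
  | succ k ih =>
    have h2 : (1 - s) ^ k ≤ 1 := pow_le_one₀ (by linarith) (by linarith)
    have h3 : (1 : ℝ) ≤ 2 ^ k := one_le_pow₀ (by norm_num)
    have h4 : (1 - s) ^ k ≤ (1 + s) ^ k := pow_le_pow_left₀ (by linarith) (by linarith) k
    have e : (1 + s) ^ (k + 1) - (1 - s) ^ (k + 1)
      = (1 + s) * ((1 + s) ^ k - (1 - s) ^ k) + (1 - s) ^ k * (2 * s) := by ring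
    rw [e]
    push_cast
    calc _ ≤ 2 * (2 * k * 2 ^ k * s) + 2 ^ k * (2 * s) := by
          gcongr
          · linarith
          · linarith
      _ ≤ _ := by
        have : 0 ≤ (2 : ℝ) ^ k * s := by positivity
        rw [pow_succ]; nlinarith

open Set Filter Topology Pointwise in
lemma vol_annulus {E : Type*} [NormedAddCommGroup E] [NormedSpace ℝ E]
    [FiniteDimensional ℝ E] [MeasureSpace E] [BorelSpace E] [(volume : Measure E).IsAddHaarMeasure]
    (n : ℕ) (hn : Module.finrank ℝ E = n) (R : ℝ) (hR : 0 < R) (T : Set E) (hT : MeasurableSet T)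
    (δ : ℝ) (hδ : 0 < δ) (hδR : δ < R) :
    volume {y : E | R - δ ≤ ‖y‖ ∧ ‖y‖ < R + δ ∧ (R / ‖y‖) • y ∈ T} ≤
      ENNReal.ofReal (2 * n * 2 ^ n / R * δ) *
        volume {y : E | ‖y‖ < R ∧ (R / ‖y‖) • y ∈ T} := by
  set A : ℝ → Set E := fun s => {y : E | ‖y‖ < s ∧ (R / ‖y‖) • y ∈ T} with hA
  have hmeas : ∀ s, MeasurableSet (A s) := by
    intro s
    apply MeasurableSet.inter
    · exact measurableSet_lt measurable_norm measurable_const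
    · have : Measurable fun y : E => (R / ‖y‖) • y :=
        (measurable_const.div measurable_norm).smul measurable_id
      exact this hT
  have hvol : ∀ s, 0 < s → volume (A s) = ENNReal.ofReal ((s / R) ^ n) * volume (A R) := by
    intro s hs
    have hc : 0 < s / R := by positivity
    have : A s = (s / R) • A R := by
      ext y
      rw [mem_smul_set_iff_inv_smul_mem₀ hc.ne']
      simp only [hA, mem_ofPred_eq]
      rw [norm_smul, norm_inv, Real.norm_eq_abs, abs_of_pos hc]
      have e1 : (s / R)⁻¹ * ‖y‖ < R ↔ ‖y‖ < s := by
        rw [inv_mul_lt_iff₀ hc]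
        have : s / R * R = s := by field_simp
        rw [this]
      have e2 : (R / ((s / R)⁻¹ * ‖y‖)) • (s / R)⁻¹ • y = (R / ‖y‖) • y := by
        rw [smul_smul]
        congr 1
        by_cases hy : ‖y‖ = 0
        · simp [hy]
        · field_simp
      rw [e1, e2]
    rw [this, Measure.addHaar_smul, hn, abs_of_pos (by positivity)]
  have hfinA : ∀ s, volume (A s) ≠ ⊤ := by
    intro s
    apply ne_top_of_le_ne_top (measure_ball_lt_top (μ := volume) (x := (0 : E)) (r := s)).ne
    apply measure_mono
    intro y hy
    simpa using hy.1
  have heq : {y : E | R - δ ≤ ‖y‖ ∧ ‖y‖ < R + δ ∧ (R / ‖y‖) • y ∈ T} = A (R + δ) \ A (R - δ) := by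
    ext y
    simp only [hA, mem_ofPred_eq, Set.mem_sdiff, not_and]
    constructor
    · rintro ⟨a, b, c⟩
      exact ⟨⟨b, c⟩, fun h => absurd a (not_le.2 h)⟩
    · rintro ⟨⟨b, c⟩, d⟩
      refine ⟨?_, b, c⟩
      by_contra h
      exact d (not_le.1 h) c
  have hsub : A (R - δ) ⊆ A (R + δ) := fun y hy => ⟨by have := hy.1; linarith, hy.2⟩
  rw [heq, measure_sdiff hsub (hmeas _).nullMeasurableSet (hfinA _), hvol (R + δ) (by linarith),
    hvol (R - δ) (by linarith), ← ENNReal.sub_mul (fun _ _ => hfinA R),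
    ← ENNReal.ofReal_sub _ (by have : 0 ≤ (R - δ) / R := div_nonneg (by linarith) hR.le
                               positivity)]
  gcongr
  have := bern_aux n (δ / R) (by positivity) (by rw [div_le_one hR]; exact hδR.le)
  have e1 : (R + δ) / R = 1 + δ / R := by field_simp
  have e2 : (R - δ) / R = 1 - δ / R := by field_simp
  rw [e1, e2]
  refine this.trans (le_of_eq ?_)
  ring

open Set Filter Topology in
lemma card_net_le {E : Type*} [NormedAddCommGroup E] [NormedSpace ℝ E]
    [FiniteDimensional ℝ E] [MeasureSpace E] [BorelSpace E] [(volume : Measure E).IsAddHaarMeasure]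
    (n : ℕ) (hn : Module.finrank ℝ E = n) (R : ℝ) (hR : 0 < R) (K : Set E)
    (hK : K ⊆ sphere (0 : E) R) (δ : ℝ) (hδ : 0 < δ) (hδR : δ < R)
    (t : Finset E) (htK : (t : Set E) ⊆ K) (ht : (t : Set E).Pairwise fun x y => δ < dist x y) :
    (t.card : ENNReal) * (ENNReal.ofReal ((δ / 2) ^ n) * volume (ball (0 : E) 1)) ≤
      ENNReal.ofReal (2 * n * 2 ^ n / R * δ) *
        volume {y : E | ‖y‖ < R ∧ (R / ‖y‖) • y ∈ thickening (2 * δ) K} := by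
  refine le_trans ?_ (vol_annulus n hn R hR (thickening (2 * δ) K) isOpen_thickening.measurableSet
    δ hδ hδR)
  have h1 : volume (⋃ x ∈ t, ball x (δ / 2)) =
      (t.card : ENNReal) * (ENNReal.ofReal ((δ / 2) ^ n) * volume (ball (0 : E) 1)) := by
    rw [measure_biUnion_finset]
    · simp_rw [Measure.addHaar_ball_of_pos volume _ (half_pos hδ), hn]
      rw [Finset.sum_const, nsmul_eq_mul]
    · intro x hx y hy hxy
      apply ball_disjoint_ball
      have := ht hx hy hxy
      linarith
    · intro x _; exact measurableSet_ball
  rw [← h1]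
  apply measure_mono
  intro y hy
  simp only [mem_iUnion] at hy
  obtain ⟨x, hx, hyx⟩ := hy
  have hxK := htK hx
  have hxn : ‖x‖ = R := by simpa using hK hxK
  rw [mem_ball, dist_eq_norm] at hyx
  have ha := abs_norm_sub_norm_le y x
  rw [hxn] at ha
  have hb := abs_le.1 (ha.trans hyx.le)
  have hy0 : 0 < ‖y‖ := by linarith [hb.1]
  refine ⟨by linarith [hb.1], by linarith [hb.2], ?_⟩
  rw [mem_thickening_iff]
  refine ⟨x, hxK, ?_⟩
  have h2 : dist ((R / ‖y‖) • y) y ≤ δ / 2 := by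
    rw [dist_eq_norm]
    have : (R / ‖y‖) • y - y = (R / ‖y‖ - 1) • y := by rw [sub_smul, one_smul]
    rw [this, norm_smul, Real.norm_eq_abs]
    have e : R / ‖y‖ - 1 = (R - ‖y‖) / ‖y‖ := by field_simp
    rw [e, abs_div, abs_of_pos hy0, div_mul_cancel₀ _ hy0.ne', abs_sub_comm]
    linarith
  calc _ ≤ dist ((R / ‖y‖) • y) y + dist y x := dist_triangle _ _ _
    _ < 2 * δ := by rw [dist_eq_norm y x]; linarith
open Set Filter Topology in
lemma hausdorff_compact_le (n : ℕ) (hn : 2 ≤ n) (R : ℝ) (hR : 0 < R) :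
    ∃ C : ENNReal, C ≠ ⊤ ∧ ∀ K : Set (EuclideanSpace ℝ (Fin n)), IsCompact K →
      K ⊆ sphere (0 : EuclideanSpace ℝ (Fin n)) R →
      μH[(n : ℝ) - 1] K ≤ C * volume {y : EuclideanSpace ℝ (Fin n) | ‖y‖ < R ∧ (R / ‖y‖) • y ∈ K} := by
  set b := volume (ball (0 : EuclideanSpace ℝ (Fin n)) 1) with hb
  have hb0 : b ≠ 0 := (measure_ball_pos volume _ one_pos).ne'
  have hbt : b ≠ ⊤ := measure_ball_lt_top.ne
  set C : ENNReal := ENNReal.ofReal (2 ^ (2 * n - 1) * (2 * n * 2 ^ n / R)) * b⁻¹ with hC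
  have hCt : C ≠ ⊤ := ENNReal.mul_ne_top ENNReal.ofReal_ne_top (ENNReal.inv_ne_top.2 hb0)
  refine ⟨C, hCt, ?_⟩
  intro K hK hKs
  set ρ : EuclideanSpace ℝ (Fin n) → EuclideanSpace ℝ (Fin n) := fun y => (R / ‖y‖) • y with hρ
  have hρm : Measurable ρ := (measurable_const.div measurable_norm).smul measurable_id
  set m : Measure (EuclideanSpace ℝ (Fin n)) := (volume.restrict (ball 0 R)).map ρ with hm
  have hmfin : IsFiniteMeasure m := by
    have : IsFiniteMeasure (volume.restrict (ball (0 : EuclideanSpace ℝ (Fin n)) R)) :=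
      ⟨by simpa using measure_ball_lt_top⟩
    infer_instance
  have hmT : ∀ T, MeasurableSet T →
      volume {y : EuclideanSpace ℝ (Fin n) | ‖y‖ < R ∧ (R / ‖y‖) • y ∈ T} = m T := by
    intro T hT
    rw [hm, Measure.map_apply hρm hT, Measure.restrict_apply (hρm hT)]
    congr 1
    ext y
    simp [hρ, and_comm]
  rw [hmT K hK.isClosed.measurableSet]
  have hex : ∀ δ : ℝ, ∃ t : Finset (EuclideanSpace ℝ (Fin n)), 0 < δ →
      ((t : Set (EuclideanSpace ℝ (Fin n))) ⊆ K ∧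
      ((t : Set (EuclideanSpace ℝ (Fin n))).Pairwise fun x y => δ < dist x y) ∧
        K ⊆ ⋃ x : t, closedBall (x : EuclideanSpace ℝ (Fin n)) δ) := by
    intro δ
    by_cases h : 0 < δ
    · obtain ⟨t, ht⟩ := exists_net K hK δ h
      exact ⟨t, fun _ => ht⟩
    · exact ⟨∅, fun h' => absurd h' h⟩
  choose t ht using hex
  have hpos : ∀ᶠ δ in 𝓝[>] (0 : ℝ), 0 < δ := eventually_mem_nhdsWithin
  have hlt : ∀ᶠ δ in 𝓝[>] (0 : ℝ), δ < R :=
    nhdsWithin_le_nhds (eventually_lt_nhds hR)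
  have hdiam : ∀ (δ : ℝ) (x : EuclideanSpace ℝ (Fin n)), 0 < δ →
      ediam (closedBall x δ) ≤ ENNReal.ofReal (2 * δ) := by
    intro δ x hδ
    apply ediam_le
    intro y hy z hz
    rw [edist_dist]
    apply ENNReal.ofReal_le_ofReal
    have := dist_triangle_right y z x
    rw [mem_closedBall] at hy hz
    linarith
  have h1 := Measure.hausdorffMeasure_le_liminf_sum ((n : ℝ) - 1) K (l := 𝓝[>] (0 : ℝ))
    (ι := fun δ => t δ) (fun δ => ENNReal.ofReal (2 * δ))
    (by
      have : Tendsto (fun δ : ℝ => ENNReal.ofReal (2 * δ)) (𝓝 0) (𝓝 (ENNReal.ofReal (2 * 0))) :=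
        (ENNReal.continuous_ofReal.comp (continuous_const.mul continuous_id)).tendsto 0
      rw [mul_zero, ENNReal.ofReal_zero] at this
      exact this.mono_left nhdsWithin_le_nhds)
    (fun δ x => closedBall (x : EuclideanSpace ℝ (Fin n)) δ)
    (by filter_upwards [hpos] with δ hδ x using hdiam δ x hδ)
    (by filter_upwards [hpos] with δ hδ using (ht δ hδ).2.2)
  refine h1.trans ?_
  have hlim : Tendsto (fun δ : ℝ => C * m (thickening (2 * δ) K)) (𝓝[>] 0) (𝓝 (C * m K)) := by
    apply ENNReal.Tendsto.const_mul _ (Or.inr hCt)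
    have := tendsto_measure_thickening_of_isClosed (μ := m) (s := K)
      ⟨1, one_pos, measure_ne_top _ _⟩ hK.isClosed
    apply this.comp
    apply tendsto_nhdsWithin_of_tendsto_nhds_of_eventually_within
    · have : Tendsto (fun δ : ℝ => 2 * δ) (𝓝 0) (𝓝 (2 * 0)) :=
        (continuous_const.mul continuous_id).tendsto 0
      rw [mul_zero] at this
      exact this.mono_left nhdsWithin_le_nhds
    · filter_upwards [hpos] with δ hδ
      exact mem_Ioi.2 (by linarith)
  rw [← hlim.liminf_eq]
  refine liminf_le_liminf ?_ (by isBoundedDefault) (by isBoundedDefault)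
  filter_upwards [hpos, hlt] with δ hδ hδR
  have h2 := card_net_le n (by simp) R hR K hKs δ hδ hδR (t δ) (ht δ hδ).1 (ht δ hδ).2.1
  rw [hmT _ isOpen_thickening.measurableSet] at h2
  have hd : (0 : ℝ) ≤ (n : ℝ) - 1 := by
    have : (2 : ℝ) ≤ n := by exact_mod_cast hn
    linarith
  have hcast : (n : ℝ) - 1 = ((n - 1 : ℕ) : ℝ) := by
    rw [Nat.cast_sub (by omega)]; simp
  calc ∑ i : t δ, ediam (closedBall (i : EuclideanSpace ℝ (Fin n)) δ) ^ ((n : ℝ) - 1)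
      ≤ ∑ i : t δ, ENNReal.ofReal ((2 * δ) ^ (n - 1)) := by
        apply Finset.sum_le_sum
        intro i _
        rw [ENNReal.ofReal_pow (by positivity), ← ENNReal.rpow_natCast, ← hcast]
        exact ENNReal.rpow_le_rpow (hdiam δ i hδ) hd
    _ = (t δ).card * ENNReal.ofReal ((2 * δ) ^ (n - 1)) := by
        rw [Finset.sum_const, nsmul_eq_mul]; simp
    _ = (t δ).card * (ENNReal.ofReal (2 ^ (2 * n - 1) / δ) * ENNReal.ofReal ((δ / 2) ^ n) * (b * b⁻¹)) := by
        rw [ENNReal.mul_inv_cancel hb0 hbt, mul_one, ← ENNReal.ofReal_mul (by positivity)]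
        congr 2
        obtain ⟨k, rfl⟩ : ∃ k, n = k + 1 := ⟨n - 1, by omega⟩
        have : 2 * (k + 1) - 1 = k + (k + 1) := by omega
        rw [this, Nat.add_sub_cancel, mul_pow, div_pow, pow_add 2 k (k + 1), pow_succ δ k]
        field_simp
    _ = ENNReal.ofReal (2 ^ (2 * n - 1) / δ) *
          ((t δ).card * (ENNReal.ofReal ((δ / 2) ^ n) * b)) * b⁻¹ := by ring
    _ ≤ ENNReal.ofReal (2 ^ (2 * n - 1) / δ) * (ENNReal.ofReal (2 * n * 2 ^ n / R * δ) *
          m (thickening (2 * δ) K)) * b⁻¹ := by gcongr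
    _ = C * m (thickening (2 * δ) K) := by
        rw [hC, ← mul_assoc, ← ENNReal.ofReal_mul (by positivity)]
        have : 2 ^ (2 * n - 1) / δ * (2 * n * 2 ^ n / R * δ) = (2 : ℝ) ^ (2 * n - 1) * (2 * n * 2 ^ n / R) := by
          field_simp
        rw [this]; ring

open Set Filter Topology in
lemma integral_sphere_le (n : ℕ) (hn : 2 ≤ n) (R : ℝ) (hR : 0 < R) :
    ∃ C : ℝ, 0 ≤ C ∧ ∀ g : EuclideanSpace ℝ (Fin n) → ℝ, Continuous g → (∀ x, 0 ≤ g x) →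
      ∫ x in sphere (0 : EuclideanSpace ℝ (Fin n)) R, g x ∂(μH[(n : ℝ) - 1]) ≤
        C * ∫ x in ball (0 : EuclideanSpace ℝ (Fin n)) R, g ((R / ‖x‖) • x) := by
  obtain ⟨C, hCt, hC⟩ := hausdorff_compact_le n hn R hR
  set ρ : EuclideanSpace ℝ (Fin n) → EuclideanSpace ℝ (Fin n) := fun y => (R / ‖y‖) • y with hρ
  have hρm : Measurable ρ := (measurable_const.div measurable_norm).smul measurable_id
  set m : Measure (EuclideanSpace ℝ (Fin n)) := (volume.restrict (ball 0 R)).map ρ with hm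
  have hmfin : IsFiniteMeasure m := by
    have : IsFiniteMeasure (volume.restrict (ball (0 : EuclideanSpace ℝ (Fin n)) R)) :=
      ⟨by simpa using measure_ball_lt_top⟩
    infer_instance
  have hmT : ∀ T, MeasurableSet T →
      volume {y : EuclideanSpace ℝ (Fin n) | ‖y‖ < R ∧ (R / ‖y‖) • y ∈ T} = m T := by
    intro T hT
    rw [hm, Measure.map_apply hρm hT, Measure.restrict_apply (hρm hT)]
    congr 1
    ext y
    simp [hρ, and_comm]
  set σ : Measure (EuclideanSpace ℝ (Fin n)) :=
    (μH[(n : ℝ) - 1]).restrict (sphere (0 : EuclideanSpace ℝ (Fin n)) R) with hσ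
  have hcomp : ∀ K : Set (EuclideanSpace ℝ (Fin n)), IsCompact K →
      K ⊆ sphere (0 : EuclideanSpace ℝ (Fin n)) R → μH[(n : ℝ) - 1] K ≤ C * m K := by
    intro K hK hKs
    rw [← hmT K hK.isClosed.measurableSet]
    exact hC K hK hKs
  have hσfin : IsFiniteMeasure σ := by
    refine ⟨?_⟩
    rw [hσ, Measure.restrict_apply_univ]
    exact (hcomp _ (isCompact_sphere _ _) le_rfl).trans_lt
      (ENNReal.mul_lt_top hCt.lt_top (measure_lt_top _ _))
  have hle : σ ≤ C • m := by
    rw [Measure.le_iff]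
    intro A hA
    rw [hA.measure_eq_iSup_isCompact_of_ne_top (measure_ne_top σ A)]
    refine iSup₂_le fun K hKA => iSup_le fun hK => ?_
    rw [hσ, Measure.restrict_apply hK.isClosed.measurableSet]
    calc _ ≤ C * m (K ∩ sphere 0 R) :=
          hcomp _ (hK.inter (isCompact_sphere _ _)) inter_subset_right
      _ ≤ C * m A := by
          gcongr
          exact inter_subset_left.trans hKA
      _ = _ := by simp
  refine ⟨C.toReal, ENNReal.toReal_nonneg, fun g hg hg0 => ?_⟩
  obtain ⟨M, hM⟩ := (isCompact_closedBall (0 : EuclideanSpace ℝ (Fin n)) R).exists_bound_of_continuousOn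
    hg.continuousOn
  have hIg : Integrable (fun x => g (ρ x)) (volume.restrict (ball (0 : EuclideanSpace ℝ (Fin n)) R)) := by
    have : IsFiniteMeasure (volume.restrict (ball (0 : EuclideanSpace ℝ (Fin n)) R)) :=
      ⟨by simpa using measure_ball_lt_top⟩
    apply Integrable.of_bound (C := M) (hg.measurable.comp hρm).aestronglyMeasurable
    refine Eventually.of_forall fun x => hM _ ?_
    rw [mem_closedBall_zero_iff, hρ]
    simp only [norm_smul, norm_div, norm_norm]
    rw [Real.norm_eq_abs, abs_of_pos hR]
    by_cases hx : ‖x‖ = 0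
    · simp [hx, hR.le]
    · rw [div_mul_cancel₀ _ hx]
  have hIm : Integrable g m := by
    rw [hm, integrable_map_measure hg.aestronglyMeasurable hρm.aemeasurable]
    exact hIg
  calc ∫ x, g x ∂σ ≤ ∫ x, g x ∂(C • m) :=
        integral_mono_measure hle (Eventually.of_forall hg0) (hIm.smul_measure hCt)
    _ = C.toReal * ∫ x, g x ∂m := by rw [integral_smul_measure, smul_eq_mul]
    _ = _ := by
        rw [hm, integral_map hρm.aemeasurable hg.aestronglyMeasurable]
/-- Partial derivative. -/
noncomputable def pdv {n : ℕ} (i : Fin n) (f : EuclideanSpace ℝ (Fin n) → ℝ)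
    (x : EuclideanSpace ℝ (Fin n)) : ℝ := fderiv ℝ f x (EuclideanSpace.single i 1)

lemma pdv_contDiff {n : ℕ} (i : Fin n) {f : EuclideanSpace ℝ (Fin n) → ℝ}
    (hf : ContDiff ℝ (⊤ : ℕ∞) f) : ContDiff ℝ (⊤ : ℕ∞) (pdv i f) :=
  (hf.fderiv_right (m := (⊤ : ℕ∞)) (by simp)).clm_apply contDiff_const

lemma smooth_diff {n : ℕ} {f : EuclideanSpace ℝ (Fin n) → ℝ}
    (hf : ContDiff ℝ (⊤ : ℕ∞) f) : Differentiable ℝ f := hf.differentiable (by simp)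

lemma pdv_pdv {n : ℕ} (i j : Fin n) {f : EuclideanSpace ℝ (Fin n) → ℝ}
    (hf : ContDiff ℝ (⊤ : ℕ∞) f) (x : EuclideanSpace ℝ (Fin n)) :
    pdv i (pdv j f) x = fderiv ℝ (fderiv ℝ f) x (EuclideanSpace.single i 1)
      (EuclideanSpace.single j 1) := by
  have h1 : DifferentiableAt ℝ (fderiv ℝ f) x :=
    ((hf.fderiv_right (m := (⊤ : ℕ∞)) (by simp)).differentiable (by simp)) x
  have h2 := h1.hasFDerivAt.clm_apply
    (hasFDerivAt_const (EuclideanSpace.single j (1 : ℝ)) x)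
  change fderiv ℝ (fun y => fderiv ℝ f y (EuclideanSpace.single j 1)) x _ = _
  rw [h2.fderiv]
  simp

lemma pdv_comm {n : ℕ} (i j : Fin n) {f : EuclideanSpace ℝ (Fin n) → ℝ}
    (hf : ContDiff ℝ (⊤ : ℕ∞) f) (x : EuclideanSpace ℝ (Fin n)) :
    pdv i (pdv j f) x = pdv j (pdv i f) x := by
  rw [pdv_pdv i j hf, pdv_pdv j i hf]
  have : IsSymmSndFDerivAt ℝ f x := hf.contDiffAt.isSymmSndFDerivAt (by
    simp only [minSmoothness_of_isRCLikeNormedField]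
    change ((2 : ℕ∞) : WithTop ℕ∞) ≤ _
    exact_mod_cast le_top)
  exact this _ _

lemma lapR_eq {n : ℕ} {f : EuclideanSpace ℝ (Fin n) → ℝ}
    (hf : ContDiff ℝ (⊤ : ℕ∞) f) : lapR n f = fun x => ∑ i, pdv i (pdv i f) x := by
  funext x
  unfold lapR
  exact Finset.sum_congr rfl fun i _ => (pdv_pdv i i hf x).symm

lemma lapR_contDiff {n : ℕ} {f : EuclideanSpace ℝ (Fin n) → ℝ}
    (hf : ContDiff ℝ (⊤ : ℕ∞) f) : ContDiff ℝ (⊤ : ℕ∞) (lapR n f) := by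
  rw [lapR_eq hf]
  exact ContDiff.sum fun i _ => pdv_contDiff i (pdv_contDiff i hf)

lemma fderiv_eq_sum {n : ℕ} (f : EuclideanSpace ℝ (Fin n) → ℝ) (x v : EuclideanSpace ℝ (Fin n)) :
    fderiv ℝ f x v = ∑ i, v i * pdv i f x := by
  have hv : v = ∑ i, v i • EuclideanSpace.single i (1 : ℝ) := by
    ext j
    simp [Pi.single_apply]
  conv_lhs => rw [hv]
  rw [map_sum]
  exact Finset.sum_congr rfl fun i _ => by rw [map_smul, smul_eq_mul]; rfl

lemma pdv_mul {n : ℕ} (i : Fin n) {f g : EuclideanSpace ℝ (Fin n) → ℝ}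
    (hf : Differentiable ℝ f) (hg : Differentiable ℝ g) (x : EuclideanSpace ℝ (Fin n)) :
    pdv i (fun y => f y * g y) x = pdv i f x * g x + f x * pdv i g x := by
  unfold pdv
  rw [fderiv_fun_mul (hf x) (hg x)]
  simp; ring

lemma pdv_sub {n : ℕ} (i : Fin n) {f g : EuclideanSpace ℝ (Fin n) → ℝ}
    (hf : Differentiable ℝ f) (hg : Differentiable ℝ g) (x : EuclideanSpace ℝ (Fin n)) :
    pdv i (fun y => f y - g y) x = pdv i f x - pdv i g x := by
  unfold pdv
  rw [fderiv_fun_sub (hf x) (hg x)]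
  simp

lemma pdv_sum {n : ℕ} (i : Fin n) {f : Fin n → EuclideanSpace ℝ (Fin n) → ℝ}
    (hf : ∀ j, Differentiable ℝ (f j)) (x : EuclideanSpace ℝ (Fin n)) :
    pdv i (fun y => ∑ j, f j y) x = ∑ j, pdv i (f j) x := by
  unfold pdv
  rw [fderiv_fun_sum (fun j _ => (hf j) x)]
  simp

lemma coord_smooth {n : ℕ} (j : Fin n) :
    ContDiff ℝ (⊤ : ℕ∞) (fun y : EuclideanSpace ℝ (Fin n) => y j) :=
  (EuclideanSpace.proj (𝕜 := ℝ) j).contDiff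

lemma pdv_coord {n : ℕ} (i j : Fin n) (x : EuclideanSpace ℝ (Fin n)) :
    pdv i (fun y : EuclideanSpace ℝ (Fin n) => y j) x = if i = j then 1 else 0 := by
  unfold pdv
  have : fderiv ℝ (fun y : EuclideanSpace ℝ (Fin n) => y j) x = EuclideanSpace.proj (𝕜 := ℝ) j :=
    (EuclideanSpace.proj (𝕜 := ℝ) j).hasFDerivAt.fderiv
  rw [this]
  simp [Pi.single_apply, eq_comm]

/-- Squared gradient. -/
noncomputable def gsq {n : ℕ} (f : EuclideanSpace ℝ (Fin n) → ℝ)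
    (x : EuclideanSpace ℝ (Fin n)) : ℝ := ∑ j, pdv j f x * pdv j f x

/-- Radial derivative. -/
noncomputable def rdv {n : ℕ} (f : EuclideanSpace ℝ (Fin n) → ℝ)
    (x : EuclideanSpace ℝ (Fin n)) : ℝ := ∑ j, x j * pdv j f x

/-- The cubic term in the Rellich identity. -/
noncomputable def tdv {n : ℕ} (f : EuclideanSpace ℝ (Fin n) → ℝ)
    (x : EuclideanSpace ℝ (Fin n)) : ℝ := ∑ i, ∑ j, x i * (pdv j f x * pdv i (pdv j f) x)

lemma gsq_smooth {n : ℕ} {f : EuclideanSpace ℝ (Fin n) → ℝ} (hf : ContDiff ℝ (⊤ : ℕ∞) f) :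
    ContDiff ℝ (⊤ : ℕ∞) (gsq f) :=
  ContDiff.sum fun j _ => (pdv_contDiff j hf).mul (pdv_contDiff j hf)

lemma rdv_smooth {n : ℕ} {f : EuclideanSpace ℝ (Fin n) → ℝ} (hf : ContDiff ℝ (⊤ : ℕ∞) f) :
    ContDiff ℝ (⊤ : ℕ∞) (rdv f) :=
  ContDiff.sum fun j _ => (coord_smooth j).mul (pdv_contDiff j hf)

lemma tdv_smooth {n : ℕ} {f : EuclideanSpace ℝ (Fin n) → ℝ} (hf : ContDiff ℝ (⊤ : ℕ∞) f) :
    ContDiff ℝ (⊤ : ℕ∞) (tdv f) :=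
  ContDiff.sum fun i _ => ContDiff.sum fun j _ =>
    (coord_smooth i).mul ((pdv_contDiff j hf).mul (pdv_contDiff i (pdv_contDiff j hf)))

lemma pdv_gsq {n : ℕ} (i : Fin n) {f : EuclideanSpace ℝ (Fin n) → ℝ}
    (hf : ContDiff ℝ (⊤ : ℕ∞) f) (x : EuclideanSpace ℝ (Fin n)) :
    pdv i (gsq f) x = 2 * ∑ j, pdv j f x * pdv i (pdv j f) x := by
  have hd := fun j => smooth_diff (pdv_contDiff j hf)
  have := pdv_sum i (f := fun j y => pdv j f y * pdv j f y) (fun j => (hd j).mul (hd j)) x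
  change pdv i (fun y => ∑ j, pdv j f y * pdv j f y) x = _
  rw [this, Finset.mul_sum]
  refine Finset.sum_congr rfl fun j _ => ?_
  rw [pdv_mul i (hd j) (hd j)]
  ring

lemma pdv_rdv {n : ℕ} (i : Fin n) {f : EuclideanSpace ℝ (Fin n) → ℝ}
    (hf : ContDiff ℝ (⊤ : ℕ∞) f) (x : EuclideanSpace ℝ (Fin n)) :
    pdv i (rdv f) x = pdv i f x + ∑ j, x j * pdv i (pdv j f) x := by
  have hd := fun j => smooth_diff (pdv_contDiff j hf)
  have hc := fun j : Fin n => smooth_diff (coord_smooth j)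
  have := pdv_sum i (f := fun j y => y j * pdv j f y) (fun j => (hc j).mul (hd j)) x
  change pdv i (fun y => ∑ j, y j * pdv j f y) x = _
  rw [this]
  simp_rw [fun j => pdv_mul i (hc j) (hd j) x, pdv_coord, Finset.sum_add_distrib]
  simp

lemma rellich_div {n : ℕ} {f : EuclideanSpace ℝ (Fin n) → ℝ}
    (hf : ContDiff ℝ (⊤ : ℕ∞) f) (x : EuclideanSpace ℝ (Fin n)) :
    ∑ i, pdv i (fun y => rdv f y * pdv i f y - gsq f y * y i) x =
      rdv f x * lapR n f x + (1 - n) * gsq f x - tdv f x := by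
  have hd := fun j => smooth_diff (pdv_contDiff j hf)
  have hc := fun j : Fin n => smooth_diff (coord_smooth j)
  have hr := smooth_diff (rdv_smooth hf)
  have hg := smooth_diff (gsq_smooth hf)
  have h1 : ∀ i, pdv i (fun y => rdv f y * pdv i f y - gsq f y * y i) x =
      pdv i f x * pdv i f x + (∑ j, x j * (pdv i f x * pdv j (pdv i f) x))
      + rdv f x * pdv i (pdv i f) x
      - 2 * (∑ j, x i * (pdv j f x * pdv i (pdv j f) x)) - gsq f x := by
    intro i
    rw [pdv_sub (f := fun y => rdv f y * pdv i f y) (g := fun y => gsq f y * y i) i (hr.mul (hd i)) (hg.mul (hc i)), pdv_mul i hr (hd i), pdv_mul i hg (hc i),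
      pdv_gsq i hf, pdv_rdv i hf, pdv_coord]
    have e1 : ∑ j, x j * (pdv i f x * pdv j (pdv i f) x) =
        (∑ j, x j * pdv i (pdv j f) x) * pdv i f x := by
      rw [Finset.sum_mul]
      refine Finset.sum_congr rfl fun j _ => ?_
      rw [pdv_comm j i hf]; ring
    have e2 : ∑ j, x i * (pdv j f x * pdv i (pdv j f) x) =
        (∑ j, pdv j f x * pdv i (pdv j f) x) * x i := by
      rw [Finset.sum_mul]
      exact Finset.sum_congr rfl fun j _ => by ring
    rw [e1, e2]
    simp
    ring
  simp_rw [h1]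
  rw [Finset.sum_sub_distrib, Finset.sum_sub_distrib, Finset.sum_add_distrib,
    Finset.sum_add_distrib, ← Finset.mul_sum, ← Finset.mul_sum, Finset.sum_comm, lapR_eq hf]
  simp only [Finset.sum_const, Finset.card_univ, Fintype.card_fin, nsmul_eq_mul]
  unfold tdv
  have : ∑ i, pdv i f x * pdv i f x = gsq f x := rfl
  rw [this]
  ring

lemma rdv_eq {n : ℕ} (f : EuclideanSpace ℝ (Fin n) → ℝ) (x : EuclideanSpace ℝ (Fin n)) :
    rdv f x = fderiv ℝ f x x := (fderiv_eq_sum f x x).symm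

lemma norm_sq_sum {n : ℕ} (x : EuclideanSpace ℝ (Fin n)) : ∑ i, x i * x i = ‖x‖ ^ 2 := by
  rw [EuclideanSpace.real_norm_sq_eq]
  exact Finset.sum_congr rfl fun i _ => by ring

lemma rdv_sq_le {n : ℕ} (f : EuclideanSpace ℝ (Fin n) → ℝ) (x : EuclideanSpace ℝ (Fin n)) :
    (rdv f x) ^ 2 ≤ ‖x‖ ^ 2 * gsq f x := by
  rw [← norm_sq_sum]
  have := Finset.sum_mul_sq_le_sq_mul_sq Finset.univ (fun i => x i) (fun i => pdv i f x)
  unfold rdv gsq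
  simpa [pow_two] using this

lemma gsq_nonneg {n : ℕ} (f : EuclideanSpace ℝ (Fin n) → ℝ) (x : EuclideanSpace ℝ (Fin n)) :
    0 ≤ gsq f x := Finset.sum_nonneg fun i _ => mul_self_nonneg _

lemma int_div_zero {n : ℕ} (R : ℝ) (hR : 0 < R)
    (F : Fin n → EuclideanSpace ℝ (Fin n) → ℝ) (hF : ∀ i, ContDiff ℝ (⊤ : ℕ∞) (F i))
    (h0 : ∀ i, ∀ x ∈ sphere (0 : EuclideanSpace ℝ (Fin n)) R, F i x = 0) :
    ∫ x in ball (0 : EuclideanSpace ℝ (Fin n)) R, ∑ i, pdv i (F i) x = 0 := by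
  rw [integral_finsetSum _ (fun i _ => cont_int R (pdv_contDiff i (hF i)).continuous)]
  refine Finset.sum_eq_zero fun i _ => ?_
  exact integral_fderiv_zero (F i) ((hF i).of_le (by exact_mod_cast le_top)) R hR (h0 i) _

lemma rellich {n : ℕ} (hn : 2 ≤ n) (R : ℝ) (hR : 0 < R) {f : EuclideanSpace ℝ (Fin n) → ℝ}
    (hf : ContDiff ℝ (⊤ : ℕ∞) f) (h0 : ∀ x ∈ sphere (0 : EuclideanSpace ℝ (Fin n)) R, f x = 0) :
    n * ∫ x in ball (0 : EuclideanSpace ℝ (Fin n)) R, gsq f ((R / ‖x‖) • x) =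
      2 * (∫ x in ball (0 : EuclideanSpace ℝ (Fin n)) R, rdv f x * lapR n f x) +
      (2 - n) * ∫ x in ball (0 : EuclideanSpace ℝ (Fin n)) R, gsq f x := by
  have hrs := rdv_smooth hf
  have hgs := gsq_smooth hf
  have h1 := int_div_zero R hR (fun i y => rdv f y * pdv i f y - gsq f y * y i)
    (fun i => (hrs.mul (pdv_contDiff i hf)).sub (hgs.mul (coord_smooth i))) (by
      intro i x hx
      have ht : ∀ j, pdv j f x = x j / R ^ 2 * rdv f x := by
        intro j
        rw [rdv_eq]
        have := fderiv_tangent f (smooth_diff hf) R hR h0 x hx (EuclideanSpace.single j 1)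
        unfold pdv
        rw [this]
        simp [EuclideanSpace.inner_single_right]
      have hxn : ‖x‖ = R := by simpa using hx
      have hG : gsq f x = rdv f x ^ 2 / R ^ 2 := by
        unfold gsq
        simp_rw [ht]
        have : ∀ j, x j / R ^ 2 * rdv f x * (x j / R ^ 2 * rdv f x) =
          (rdv f x ^ 2 / R ^ 4) * (x j * x j) := by intro j; field_simp
        simp_rw [this]
        rw [← Finset.mul_sum, norm_sq_sum, hxn]
        field_simp
      simp only
      rw [hG, ht i]
      ring)
  simp_rw [rellich_div hf] at h1
  have i1 : IntegrableOn (fun x => rdv f x * lapR n f x) (ball 0 R) :=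
    cont_int R (hrs.mul (lapR_contDiff hf)).continuous
  have i2 : IntegrableOn (gsq f) (ball 0 R) := cont_int R hgs.continuous
  have i3 : IntegrableOn (tdv f) (ball 0 R) := cont_int R (tdv_smooth hf).continuous
  have i12 : IntegrableOn (fun x => rdv f x * lapR n f x + (1 - n) * gsq f x) (ball 0 R) :=
    i1.add (i2.const_mul _)
  rw [integral_sub i12 i3, integral_add i1 (i2.const_mul _),
    integral_const_mul] at h1
  have h2 := radial_div n hn R hR (gsq f) (hgs.of_le (by exact_mod_cast le_top))
  have h3 : ∀ x, fderiv ℝ (gsq f) x x = 2 * tdv f x := by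
    intro x
    rw [fderiv_eq_sum]
    unfold tdv
    rw [Finset.mul_sum]
    refine Finset.sum_congr rfl fun i _ => ?_
    rw [pdv_gsq i hf, ← Finset.mul_sum]
    ring
  simp_rw [h3] at h2
  rw [integral_add (i2.const_mul _) (i3.const_mul _), integral_const_mul, integral_const_mul] at h2
  linarith

lemma green1 {n : ℕ} (R : ℝ) (hR : 0 < R) {f g : EuclideanSpace ℝ (Fin n) → ℝ}
    (hf : ContDiff ℝ (⊤ : ℕ∞) f) (hg : ContDiff ℝ (⊤ : ℕ∞) g)
    (h0 : ∀ x ∈ sphere (0 : EuclideanSpace ℝ (Fin n)) R, f x = 0) :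
    ∫ x in ball (0 : EuclideanSpace ℝ (Fin n)) R, (∑ i, pdv i f x * pdv i g x) =
      - ∫ x in ball (0 : EuclideanSpace ℝ (Fin n)) R, f x * lapR n g x := by
  have h1 := int_div_zero R hR (fun i y => f y * pdv i g y)
    (fun i => hf.mul (pdv_contDiff i hg)) (by
      intro i x hx
      simp [h0 x hx])
  have h2 : ∀ x, ∑ i, pdv i (fun y => f y * pdv i g y) x =
      (∑ i, pdv i f x * pdv i g x) + f x * lapR n g x := by
    intro x
    rw [lapR_eq hg, Finset.mul_sum, ← Finset.sum_add_distrib]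
    exact Finset.sum_congr rfl fun i _ =>
      pdv_mul i (smooth_diff hf) (smooth_diff (pdv_contDiff i hg)) x
  simp_rw [h2] at h1
  rw [integral_add (cont_int R (ContDiff.sum fun i _ =>
    (pdv_contDiff i hf).mul (pdv_contDiff i hg)).continuous)
    (cont_int R (hf.mul (lapR_contDiff hg)).continuous)] at h1
  linarith
open Set Filter Topology in
lemma boundary_est (n : ℕ) (hn : 2 ≤ n) (R : ℝ) (hR : 0 < R) :
    ∃ C : ℝ, 0 ≤ C ∧ ∀ f : EuclideanSpace ℝ (Fin n) → ℝ, ContDiff ℝ (⊤ : ℕ∞) f →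
      (∀ x ∈ sphere (0 : EuclideanSpace ℝ (Fin n)) R, f x = 0) →
      ∫ x in sphere (0 : EuclideanSpace ℝ (Fin n)) R,
          (normalDerivR n R f x) ^ 2 ∂(μH[(n : ℝ) - 1]) ≤
        C * ((∫ x in ball (0 : EuclideanSpace ℝ (Fin n)) R, (f x) ^ 2) +
          ∫ x in ball (0 : EuclideanSpace ℝ (Fin n)) R, (lapR n f x) ^ 2) := by
  obtain ⟨C, hC0, hC⟩ := integral_sphere_le n hn R hR
  refine ⟨C * (R ^ 2 + 1), by positivity, fun f hf h0 => ?_⟩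
  have hnc : Continuous fun x => (normalDerivR n R f x) ^ 2 := by
    unfold normalDerivR
    have hs : Continuous fun x : EuclideanSpace ℝ (Fin n) => R⁻¹ • x := continuous_id.const_smul R⁻¹
    exact ((hf.continuous_fderiv (by simp)).clm_apply hs).pow 2
  have h1 := hC _ hnc (fun x => sq_nonneg _)
  have hls := lapR_contDiff hf
  have h2 : ∫ x in ball (0 : EuclideanSpace ℝ (Fin n)) R, (normalDerivR n R f ((R / ‖x‖) • x)) ^ 2 ≤
      ∫ x in ball (0 : EuclideanSpace ℝ (Fin n)) R, gsq f ((R / ‖x‖) • x) := by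
    refine integral_mono (radial_integrable n R hR _ hnc)
      (radial_integrable n R hR _ (gsq_smooth hf).continuous) fun x => ?_
    simp only
    set y := (R / ‖x‖) • x with hy
    have hyn : ‖y‖ ≤ R := by
      simp only [hy, norm_smul, norm_div, norm_norm]
      rw [Real.norm_eq_abs, abs_of_pos hR]
      by_cases hx : ‖x‖ = 0
      · simp [hx, hR.le]
      · rw [div_mul_cancel₀ _ hx]
    have e : normalDerivR n R f y = R⁻¹ * rdv f y := by
      unfold normalDerivR
      rw [map_smul, smul_eq_mul, rdv_eq]
    rw [e, mul_pow]
    have h3 := rdv_sq_le f y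
    have h4 : ‖y‖ ^ 2 ≤ R ^ 2 := pow_le_pow_left₀ (norm_nonneg _) hyn 2
    have h5 := gsq_nonneg f y
    rw [inv_pow, inv_mul_le_iff₀ (by positivity)]
    exact h3.trans (mul_le_mul_of_nonneg_right h4 h5)
  have hrel := rellich hn R hR hf h0
  have hgr := green1 R hR hf hf h0
  change ∫ x in ball (0 : EuclideanSpace ℝ (Fin n)) R, gsq f x = _ at hgr
  have jg : IntegrableOn (gsq f) (ball 0 R) := cont_int R (gsq_smooth hf).continuous
  have jf : IntegrableOn (fun x => f x ^ 2) (ball 0 R) := cont_int R (hf.continuous.pow 2)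
  have jl : IntegrableOn (fun x => lapR n f x ^ 2) (ball 0 R) := cont_int R (hls.continuous.pow 2)
  have jfl : IntegrableOn (fun x => f x * lapR n f x) (ball 0 R) :=
    cont_int R (hf.continuous.mul hls.continuous)
  have jrl : IntegrableOn (fun x => rdv f x * lapR n f x) (ball 0 R) :=
    cont_int R ((rdv_smooth hf).continuous.mul hls.continuous)
  have h6 : 2 * ∫ x in ball (0 : EuclideanSpace ℝ (Fin n)) R, gsq f x ≤
      (∫ x in ball (0 : EuclideanSpace ℝ (Fin n)) R, (f x) ^ 2) +
          ∫ x in ball (0 : EuclideanSpace ℝ (Fin n)) R, (lapR n f x) ^ 2 := by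
    rw [hgr, ← integral_neg, ← integral_const_mul, ← integral_add jf jl]
    refine integral_mono (jfl.neg.const_mul 2) (jf.add jl) fun x => ?_
    simp only [Pi.neg_apply]
    nlinarith [sq_nonneg (f x + lapR n f x)]
  have h7 : 2 * ∫ x in ball (0 : EuclideanSpace ℝ (Fin n)) R, rdv f x * lapR n f x ≤
      R ^ 2 * (∫ x in ball (0 : EuclideanSpace ℝ (Fin n)) R, gsq f x) +
          ∫ x in ball (0 : EuclideanSpace ℝ (Fin n)) R, (lapR n f x) ^ 2 := by
    rw [← integral_const_mul, ← integral_const_mul, ← integral_add (jg.const_mul _) jl]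
    refine setIntegral_mono_on (jrl.const_mul 2) ((jg.const_mul _).add jl) measurableSet_ball
      fun x hx => ?_
    have hxn : ‖x‖ ≤ R := by
      rw [mem_ball_zero_iff] at hx; exact hx.le
    have h3 := rdv_sq_le f x
    have h4 : ‖x‖ ^ 2 ≤ R ^ 2 := pow_le_pow_left₀ (norm_nonneg _) hxn 2
    have h5 := mul_le_mul_of_nonneg_right h4 (gsq_nonneg f x)
    nlinarith [sq_nonneg (rdv f x - lapR n f x)]
  have pg : 0 ≤ ∫ x in ball (0 : EuclideanSpace ℝ (Fin n)) R, gsq f x :=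
    integral_nonneg fun x => gsq_nonneg f x
  have pgr : 0 ≤ ∫ x in ball (0 : EuclideanSpace ℝ (Fin n)) R, gsq f ((R / ‖x‖) • x) :=
    integral_nonneg fun x => gsq_nonneg f _
  have pf : 0 ≤ ∫ x in ball (0 : EuclideanSpace ℝ (Fin n)) R, f x ^ 2 :=
    integral_nonneg fun x => sq_nonneg _
  have pl : 0 ≤ ∫ x in ball (0 : EuclideanSpace ℝ (Fin n)) R, lapR n f x ^ 2 :=
    integral_nonneg fun x => sq_nonneg _
  have hn2 : (2 : ℝ) ≤ n := by exact_mod_cast hn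
  refine h1.trans ?_
  rw [mul_assoc]
  refine mul_le_mul_of_nonneg_left (h2.trans ?_) hC0
  generalize (∫ x in ball (0 : EuclideanSpace ℝ (Fin n)) R, gsq f ((R / ‖x‖) • x)) = a at *
  generalize (∫ x in ball (0 : EuclideanSpace ℝ (Fin n)) R, gsq f x) = b at *
  generalize (∫ x in ball (0 : EuclideanSpace ℝ (Fin n)) R, f x ^ 2) = c at *
  generalize (∫ x in ball (0 : EuclideanSpace ℝ (Fin n)) R, lapR n f x ^ 2) = d at *
  generalize (∫ x in ball (0 : EuclideanSpace ℝ (Fin n)) R, rdv f x * lapR n f x) = e at *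
  have k1 : 2 * a ≤ n * a := mul_le_mul_of_nonneg_right hn2 pgr
  have k2 : (2 - n) * b ≤ 0 := mul_nonpos_of_nonpos_of_nonneg (by linarith) pg
  have k3 : R ^ 2 * (2 * b) ≤ R ^ 2 * (c + d) := mul_le_mul_of_nonneg_left h6 (sq_nonneg R)
  have k4 : 0 ≤ R ^ 2 * (c + d) := by positivity
  linarith

/-- Boundary estimates for Navier eigenfunctions of the biharmonic operator `Δ² + V`. -/
theorem stmt1 (n : ℕ) (hn : 2 ≤ n) (R Q : ℝ) (hR : 0 < R) (hQ : 0 < Q) :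
    ∃ C > 0, ∀ (V : EuclideanSpace ℝ (Fin n) → ℝ), Measurable V → (∀ x, |V x| ≤ Q) →
      ∀ lam : ℝ, 2 * Q + 1 ≤ lam →
      ∀ u : EuclideanSpace ℝ (Fin n) → ℝ, ContDiff ℝ (⊤ : ℕ∞) u →
      (∀ x ∈ closedBall (0 : EuclideanSpace ℝ (Fin n)) R,
        lapR n (lapR n u) x + V x * u x = lam * u x) →
      (∀ x ∈ sphere (0 : EuclideanSpace ℝ (Fin n)) R, u x = 0) →
      (∀ x ∈ sphere (0 : EuclideanSpace ℝ (Fin n)) R, lapR n u x = 0) →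
      (∫ x in ball (0 : EuclideanSpace ℝ (Fin n)) R, (u x) ^ 2) = 1 →
      (∫ x in sphere (0 : EuclideanSpace ℝ (Fin n)) R,
          (normalDerivR n R u x) ^ 2 ∂(μH[(n : ℝ) - 1])) ≤ C * lam ∧
      (∫ x in sphere (0 : EuclideanSpace ℝ (Fin n)) R,
          (normalDerivR n R (lapR n u) x) ^ 2 ∂(μH[(n : ℝ) - 1])) ≤ C * lam ^ 2 := by
  obtain ⟨C, hC0, hC⟩ := boundary_est n hn R hR
  refine ⟨6 * C + 1, by positivity, ?_⟩
  intro V _ hV lam hlam u hu heq hu0 hw0 hnorm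
  have hw := lapR_contDiff hu
  have hww := lapR_contDiff hw
  have b1 := hC u hu hu0
  have b2 := hC (lapR n u) hw hw0
  have g1 := green1 R hR hu hw hu0
  have g2 := green1 R hR hw hu hw0
  have g3 : ∫ x in ball (0 : EuclideanSpace ℝ (Fin n)) R, (lapR n u x) ^ 2 =
      ∫ x in ball (0 : EuclideanSpace ℝ (Fin n)) R, u x * lapR n (lapR n u) x := by
    have : ∀ x, ∑ i, pdv i u x * pdv i (lapR n u) x = ∑ i, pdv i (lapR n u) x * pdv i u x :=
      fun x => Finset.sum_congr rfl fun i _ => mul_comm _ _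
    simp_rw [this] at g1
    simp_rw [pow_two]
    linarith
  have ju : IntegrableOn (fun x => u x ^ 2) (ball 0 R) := cont_int R (hu.continuous.pow 2)
  have hpt : ∀ x ∈ ball (0 : EuclideanSpace ℝ (Fin n)) R,
      lapR n (lapR n u) x = (lam - V x) * u x ∧ 0 ≤ lam - V x ∧ lam - V x ≤ 2 * lam := by
    intro x hx
    have h1 := heq x (ball_subset_closedBall hx)
    have h2 := abs_le.1 (hV x)
    exact ⟨by linarith, by linarith [h2.2], by linarith [h2.1]⟩
  have e1 : ∫ x in ball (0 : EuclideanSpace ℝ (Fin n)) R, (lapR n u x) ^ 2 ≤ 2 * lam := by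
    rw [g3]
    calc _ ≤ ∫ x in ball (0 : EuclideanSpace ℝ (Fin n)) R, 2 * lam * u x ^ 2 := by
          refine setIntegral_mono_on (cont_int R (hu.continuous.mul hww.continuous))
            (ju.const_mul _) measurableSet_ball fun x hx => ?_
          obtain ⟨h1, h2, h3⟩ := hpt x hx
          rw [h1]
          have := mul_le_mul_of_nonneg_right h3 (sq_nonneg (u x))
          linarith
      _ = 2 * lam := by rw [integral_const_mul, hnorm, mul_one]
  have e2 : ∫ x in ball (0 : EuclideanSpace ℝ (Fin n)) R, (lapR n (lapR n u) x) ^ 2 ≤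
      (2 * lam) ^ 2 := by
    calc _ ≤ ∫ x in ball (0 : EuclideanSpace ℝ (Fin n)) R, (2 * lam) ^ 2 * u x ^ 2 := by
          refine setIntegral_mono_on (cont_int R (hww.continuous.pow 2))
            (ju.const_mul _) measurableSet_ball fun x hx => ?_
          obtain ⟨h1, h2, h3⟩ := hpt x hx
          rw [h1, mul_pow]
          exact mul_le_mul_of_nonneg_right (pow_le_pow_left₀ h2 h3 2) (sq_nonneg (u x))
      _ = (2 * lam) ^ 2 := by rw [integral_const_mul, hnorm, mul_one]
  have hl1 : 1 ≤ lam := by linarith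
  have hl2 : lam ≤ lam ^ 2 := by nlinarith
  constructor
  · refine b1.trans ?_
    rw [hnorm]
    calc C * (1 + _) ≤ C * (6 * lam) := by
          refine mul_le_mul_of_nonneg_left ?_ hC0
          linarith
      _ ≤ _ := by linarith
  · refine b2.trans ?_
    calc C * (_ + _) ≤ C * (6 * lam ^ 2) := by
          refine mul_le_mul_of_nonneg_left ?_ hC0
          linarith
      _ ≤ _ := by nlinarith
end

section
/- Let n ≥ 1, R > 0, let V : ℝⁿ → ℝ be a bounded measurable real-valued function, let λ ∈ ℂ with Im λ ≠ 0, let f : ℝⁿ → ℂ be continuous, and let u : ℝⁿ → ℂ be smooth with Δ²u + V·u − λ·u = f at every point of the closed ball of radius R centered at the origin, and with u(x) = 0 and Δu(x) = 0 for every x ∈ ∂B_R. Then (∫_{B_R} |u|² dx)^{1/2} ≤ (1/|Im λ|)·(∫_{B_R} |f|² dx)^{1/2}. -/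
open MeasureTheory Metric

/-- The Laplacian of a complex-valued function on `EuclideanSpace ℝ (Fin n)`:
the trace of the second Fréchet derivative. -/
noncomputable def lapC (n : ℕ) (f : EuclideanSpace ℝ (Fin n) → ℂ) (x : EuclideanSpace ℝ (Fin n)) : ℂ :=
  ∑ i : Fin n, fderiv ℝ (fderiv ℝ f) x (EuclideanSpace.single i 1) (EuclideanSpace.single i 1)

theorem aux_div {n : ℕ} {R : ℝ} (hR : 0 < R) (h : EuclideanSpace ℝ (Fin n) → ℝ)
    (hh : ContDiff ℝ 1 h) (h0 : ∀ x ∈ sphere (0 : EuclideanSpace ℝ (Fin n)) R, h x = 0)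
    (e : EuclideanSpace ℝ (Fin n)) :
    ∫ x in ball (0 : EuclideanSpace ℝ (Fin n)) R, fderiv ℝ h x e = 0 := by
  obtain ⟨K, hK⟩ := (hh.contDiffOn (s := closedBall (0 : EuclideanSpace ℝ (Fin n)) R)).exists_lipschitzOnWith
    one_ne_zero (convex_closedBall _ _) (isCompact_closedBall _ _)
  set H : EuclideanSpace ℝ (Fin n) → ℝ :=
    (closedBall (0 : EuclideanSpace ℝ (Fin n)) R).indicator h with hH
  have key : ∀ x y, x ∈ closedBall (0 : EuclideanSpace ℝ (Fin n)) R →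
      y ∉ closedBall (0 : EuclideanSpace ℝ (Fin n)) R → dist (H x) (H y) ≤ K * dist x y := by
    intro x y hx hy
    obtain ⟨z, hz, hzR⟩ := (convex_segment (𝕜 := ℝ) x y).isPreconnected.intermediate_value
      (left_mem_segment ℝ x y) (right_mem_segment ℝ x y) (f := fun z => ‖z‖)
      continuous_norm.continuousOn (show R ∈ Set.Icc ‖x‖ ‖y‖ by
        simp at hx hy
        exact ⟨hx, hy.le⟩)
    have hzs : z ∈ sphere (0 : EuclideanSpace ℝ (Fin n)) R := by simpa using hzR
    have h1 := hK.dist_le_mul x hx z (sphere_subset_closedBall hzs)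
    rw [h0 z hzs] at h1
    rw [hH, Set.indicator_of_mem hx, Set.indicator_of_notMem hy]
    refine h1.trans ?_
    have := dist_add_dist_of_mem_segment hz
    have h2 : dist x z ≤ dist x y := by linarith [dist_nonneg (x := z) (y := y)]
    gcongr
  have hLip : LipschitzWith K H := by
    refine LipschitzWith.of_dist_le_mul fun x y => ?_
    by_cases hx : x ∈ closedBall (0 : EuclideanSpace ℝ (Fin n)) R <;>
      by_cases hy : y ∈ closedBall (0 : EuclideanSpace ℝ (Fin n)) R
    · rw [hH, Set.indicator_of_mem hx, Set.indicator_of_mem hy]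
      exact hK.dist_le_mul x hx y hy
    · exact key x y hx hy
    · rw [dist_comm, dist_comm x y]; exact key y x hy hx
    · rw [hH, Set.indicator_of_notMem hx, Set.indicator_of_notMem hy]
      simp; positivity
  have hcs : HasCompactSupport H :=
    HasCompactSupport.intro (isCompact_closedBall 0 R) fun x hx => Set.indicator_of_notMem hx _
  have h1 := LipschitzWith.integral_lineDeriv_mul_eq (μ := volume)
    (LipschitzWith.const (1 : ℝ)) hLip hcs (-e)
  simp only [neg_neg, mul_one] at h1
  have hz : ∀ x : EuclideanSpace ℝ (Fin n),
      lineDeriv ℝ (fun _ : EuclideanSpace ℝ (Fin n) => (1 : ℝ)) x (-e) = 0 := by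
    intro x; simp [lineDeriv]
  simp only [hz, zero_mul, integral_zero] at h1
  rw [h1, ← integral_indicator measurableSet_ball]
  apply integral_congr_ae
  have hs : ∀ᵐ x ∂(volume : Measure (EuclideanSpace ℝ (Fin n))),
      x ∉ sphere (0 : EuclideanSpace ℝ (Fin n)) R :=
    measure_eq_zero_iff_ae_notMem.1 (Measure.addHaar_sphere_of_ne_zero _ _ hR.ne')
  filter_upwards [hs] with x hx
  by_cases hb : x ∈ ball (0 : EuclideanSpace ℝ (Fin n)) R
  · rw [Set.indicator_of_mem hb]
    rw [← (hh.differentiable one_ne_zero x).lineDeriv_eq_fderiv]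
    refine (Filter.EventuallyEq.lineDeriv_eq ?_).symm
    filter_upwards [isOpen_ball.mem_nhds hb] with y hy
    exact Set.indicator_of_mem (ball_subset_closedBall hy) _
  · rw [Set.indicator_of_notMem hb]
    have hc : x ∉ closedBall (0 : EuclideanSpace ℝ (Fin n)) R := by
      simp at hx hb ⊢
      exact lt_of_le_of_ne hb (Ne.symm hx)
    have : H =ᶠ[nhds x] fun _ => (0 : ℝ) := by
      filter_upwards [isClosed_closedBall.isOpen_compl.mem_nhds hc] with y hy
      exact Set.indicator_of_notMem hy _
    rw [this.lineDeriv_eq]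
    simp [lineDeriv]

theorem aux_smooth {n : ℕ} {u : EuclideanSpace ℝ (Fin n) → ℂ} (hu : ContDiff ℝ (⊤ : ℕ∞) u)
    (e : EuclideanSpace ℝ (Fin n)) : ContDiff ℝ (⊤ : ℕ∞) (fun x => fderiv ℝ u x e) :=
  (hu.fderiv_right (m := (⊤ : ℕ∞)) (by simp)).clm_apply contDiff_const

theorem aux_lap_smooth {n : ℕ} {u : EuclideanSpace ℝ (Fin n) → ℂ}
    (hu : ContDiff ℝ (⊤ : ℕ∞) u) : ContDiff ℝ (⊤ : ℕ∞) (lapC n u) := by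
  unfold lapC
  refine ContDiff.sum fun i _ => ?_
  exact (((hu.fderiv_right (m := (⊤ : ℕ∞)) (by simp)).fderiv_right (m := (⊤ : ℕ∞))
    (by simp)).clm_apply contDiff_const).clm_apply contDiff_const

theorem aux_snd {n : ℕ} {u : EuclideanSpace ℝ (Fin n) → ℂ}
    (hu : ContDiff ℝ (⊤ : ℕ∞) u) (e x : EuclideanSpace ℝ (Fin n)) :
    fderiv ℝ (fun y => fderiv ℝ u y e) x e = fderiv ℝ (fderiv ℝ u) x e e := by
  have hd : DifferentiableAt ℝ (fderiv ℝ u) x :=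
    (hu.fderiv_right (m := (⊤ : ℕ∞)) (by simp)).differentiable (by simp) x
  rw [fderiv_clm_apply hd (differentiableAt_const e)]
  simp

theorem aux_green {n : ℕ} {R : ℝ} (hR : 0 < R) {u v : EuclideanSpace ℝ (Fin n) → ℂ}
    (hu : ContDiff ℝ (⊤ : ℕ∞) u) (hv : ContDiff ℝ (⊤ : ℕ∞) v)
    (hub : ∀ x ∈ sphere (0 : EuclideanSpace ℝ (Fin n)) R, u x = 0)
    (hvb : ∀ x ∈ sphere (0 : EuclideanSpace ℝ (Fin n)) R, v x = 0) :
    ∫ x in ball (0 : EuclideanSpace ℝ (Fin n)) R,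
      (star (u x) * lapC n v x - v x * star (lapC n u x)).im = 0 := by
  set e : Fin n → EuclideanSpace ℝ (Fin n) := fun i => EuclideanSpace.single i 1 with he
  set h : Fin n → EuclideanSpace ℝ (Fin n) → ℝ := fun i x =>
    (u x).re * (fderiv ℝ v x (e i)).im - (u x).im * (fderiv ℝ v x (e i)).re
    - ((v x).im * (fderiv ℝ u x (e i)).re - (v x).re * (fderiv ℝ u x (e i)).im) with hh
  have hre : ∀ {w : EuclideanSpace ℝ (Fin n) → ℂ}, ContDiff ℝ (⊤ : ℕ∞) w →
      ContDiff ℝ (⊤ : ℕ∞) (fun x => (w x).re) := fun hw => Complex.reCLM.contDiff.comp hw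
  have him : ∀ {w : EuclideanSpace ℝ (Fin n) → ℂ}, ContDiff ℝ (⊤ : ℕ∞) w →
      ContDiff ℝ (⊤ : ℕ∞) (fun x => (w x).im) := fun hw => Complex.imCLM.contDiff.comp hw
  have hsm : ∀ i, ContDiff ℝ (⊤ : ℕ∞) (h i) := by
    intro i
    have a := aux_smooth hu (e i)
    have b := aux_smooth hv (e i)
    exact (((hre hu).mul (him b)).sub ((him hu).mul (hre b))).sub
      (((him hv).mul (hre a)).sub ((hre hv).mul (him a)))
  have hint : ∀ i, ∫ x in ball (0 : EuclideanSpace ℝ (Fin n)) R, fderiv ℝ (h i) x (e i) = 0 := by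
    intro i
    refine aux_div hR (h i) ((hsm i).of_le (by exact_mod_cast le_top)) ?_ (e i)
    intro x hx
    simp [hh, hub x hx, hvb x hx]
  have hcont : ∀ i, Continuous fun x => fderiv ℝ (h i) x (e i) := fun i =>
    ((hsm i).continuous_fderiv (by simp)).clm_apply continuous_const
  have hsum : ∫ x in ball (0 : EuclideanSpace ℝ (Fin n)) R, ∑ i, fderiv ℝ (h i) x (e i) = 0 := by
    rw [integral_finsetSum]
    · exact Finset.sum_eq_zero fun i _ => hint i
    · intro i _
      exact ((hcont i).continuousOn.integrableOn_compact (isCompact_closedBall 0 R)).mono_set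
        ball_subset_closedBall
  rw [← hsum]
  congr 1
  funext x
  have hR' : ∀ {w : EuclideanSpace ℝ (Fin n) → ℂ}, ContDiff ℝ (⊤ : ℕ∞) w →
      HasFDerivAt (fun x => (w x).re) (Complex.reCLM.comp (fderiv ℝ w x)) x := fun hw =>
    Complex.reCLM.hasFDerivAt.comp x (hw.differentiable (by simp) x).hasFDerivAt
  have hI' : ∀ {w : EuclideanSpace ℝ (Fin n) → ℂ}, ContDiff ℝ (⊤ : ℕ∞) w →
      HasFDerivAt (fun x => (w x).im) (Complex.imCLM.comp (fderiv ℝ w x)) x := fun hw =>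
    Complex.imCLM.hasFDerivAt.comp x (hw.differentiable (by simp) x).hasFDerivAt
  have hd : ∀ i, fderiv ℝ (h i) x (e i) =
      (u x).re * (fderiv ℝ (fderiv ℝ v) x (e i) (e i)).im
      - (u x).im * (fderiv ℝ (fderiv ℝ v) x (e i) (e i)).re
      - ((v x).im * (fderiv ℝ (fderiv ℝ u) x (e i) (e i)).re
        - (v x).re * (fderiv ℝ (fderiv ℝ u) x (e i) (e i)).im) := by
    intro i
    have a := aux_smooth hu (e i)
    have b := aux_smooth hv (e i)
    have := ((((hR' hu).mul (hI' b)).sub ((hI' hu).mul (hR' b))).sub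
      (((hI' hv).mul (hR' a)).sub ((hR' hv).mul (hI' a)))).fderiv
    have h2 := congrArg (fun L => L (e i)) this
    refine Eq.trans h2 ?_
    simp [aux_snd hu, aux_snd hv]
    ring
  simp only [hd]
  simp only [Finset.sum_sub_distrib, ← Finset.mul_sum]
  simp [lapC, he]
  ring

/-- L² energy estimate for the Navier boundary value problem of the biharmonic
operator `Δ² + V`: if `Δ²u + Vu - λu = f` in `B_R` with `u = Δu = 0` on `∂B_R`,
then `‖u‖_{L²(B_R)} ≤ |Im λ|⁻¹ ‖f‖_{L²(B_R)}`. -/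
theorem stmt3 (n : ℕ) (hn : 1 ≤ n) (R : ℝ) (hR : 0 < R)
    (V : EuclideanSpace ℝ (Fin n) → ℝ) (hVmeas : Measurable V)
    (hVbdd : ∃ M : ℝ, ∀ x, |V x| ≤ M)
    (lam : ℂ) (hlam : lam.im ≠ 0)
    (f : EuclideanSpace ℝ (Fin n) → ℂ) (hf : Continuous f)
    (u : EuclideanSpace ℝ (Fin n) → ℂ) (hu : ContDiff ℝ (⊤ : ℕ∞) u)
    (heq : ∀ x ∈ closedBall (0 : EuclideanSpace ℝ (Fin n)) R,
      lapC n (lapC n u) x + (V x : ℂ) * u x - lam * u x = f x)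
    (hub : ∀ x ∈ sphere (0 : EuclideanSpace ℝ (Fin n)) R, u x = 0)
    (hlapub : ∀ x ∈ sphere (0 : EuclideanSpace ℝ (Fin n)) R, lapC n u x = 0) :
    Real.sqrt (∫ x in ball (0 : EuclideanSpace ℝ (Fin n)) R, ‖u x‖ ^ 2)
      ≤ (1 / |lam.im|) * Real.sqrt (∫ x in ball (0 : EuclideanSpace ℝ (Fin n)) R, ‖f x‖ ^ 2) := by
  have hv := aux_lap_smooth hu
  have hg := aux_green hR hu hv hub hlapub
  set B := ball (0 : EuclideanSpace ℝ (Fin n)) R with hB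
  have hio : ∀ g : EuclideanSpace ℝ (Fin n) → ℝ, Continuous g → IntegrableOn g B volume :=
    fun g hgc => (hgc.continuousOn.integrableOn_compact (isCompact_closedBall 0 R)).mono_set
      ball_subset_closedBall
  set c := |lam.im| with hc
  have hcpos : 0 < c := abs_pos.2 hlam
  have huc := hu.continuous
  have iu : IntegrableOn (fun x => ‖u x‖ ^ 2) B volume := hio _ (by fun_prop)
  have iff' : IntegrableOn (fun x => ‖f x‖ ^ 2) B volume := hio _ (by fun_prop)
  have ig : IntegrableOn (fun x => (star (u x) * lapC n (lapC n u) x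
      - lapC n u x * star (lapC n u x)).im) B volume := by
    refine hio _ ?_
    have h1 := hv.continuous
    have h2 := (aux_lap_smooth hv).continuous
    exact Complex.continuous_im.comp (((continuous_star.comp huc).mul h2).sub
      (h1.mul (continuous_star.comp h1)))
  have main : c ^ 2 * ∫ x in B, ‖u x‖ ^ 2 ≤ ∫ x in B, ‖f x‖ ^ 2 := by
    obtain ⟨s, hs, hsc⟩ : ∃ s : ℝ, s ^ 2 = 1 ∧ lam.im = s * c := by
      rcases abs_choice lam.im with h | h
      · exact ⟨1, by norm_num, by rw [hc, h]; ring⟩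
      · exact ⟨-1, by norm_num, by rw [hc, h]; ring⟩
    have hle : ∫ x in B, (c ^ 2 * ‖u x‖ ^ 2 - (2 * c * s) * (star (u x) * lapC n (lapC n u) x
        - lapC n u x * star (lapC n u x)).im) ≤ ∫ x in B, ‖f x‖ ^ 2 := by
      refine setIntegral_mono_on ((iu.const_mul _).sub (ig.const_mul _)) iff'
        measurableSet_ball fun x hx => ?_
      have hE := heq x (ball_subset_closedBall hx)
      have hr := congrArg Complex.re hE
      have hi := congrArg Complex.im hE
      simp at hr hi
      rw [← Complex.normSq_eq_norm_sq, ← Complex.normSq_eq_norm_sq, Complex.normSq_apply,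
        Complex.normSq_apply]
      simp
      generalize (lapC n (lapC n u) x).re = p at *
      generalize (lapC n (lapC n u) x).im = q at *
      generalize (u x).re = a at *
      generalize (u x).im = b at *
      rw [hsc] at hr hi
      have e1 : a * q - b * p = a * (f x).im - b * (f x).re + s * c * (a * a + b * b) := by
        rw [← hr, ← hi]; ring
      have e2 : c ^ 2 * (a * a + b * b) - 2 * c * s * (a * q - b * p) =
          (f x).re * (f x).re + (f x).im * (f x).im
          - (((f x).im + c * s * a) ^ 2 + ((f x).re - c * s * b) ^ 2) := by
        rw [e1]
        linear_combination (- c ^ 2 * (a * a + b * b)) * hs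
      have e3 := sq_nonneg ((f x).im + c * s * a)
      have e4 := sq_nonneg ((f x).re - c * s * b)
      linarith
    rw [integral_sub (iu.const_mul _) (ig.const_mul _), integral_const_mul, integral_const_mul,
      hg] at hle
    linarith
  have h1 : c * Real.sqrt (∫ x in B, ‖u x‖ ^ 2) ≤ Real.sqrt (∫ x in B, ‖f x‖ ^ 2) := by
    rw [← Real.sqrt_sq hcpos.le, ← Real.sqrt_mul (sq_nonneg c)]
    exact Real.sqrt_le_sqrt main
  rw [one_div, ← div_eq_inv_mul, le_div_iff₀ hcpos]
  linarith
end
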